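/- Let O_K be the ring of integers of an imaginary quadratic field K, viewed as a lattice in ℂ. Let a, b be nonzero ideals of O_K with a·conj(b) principal, generated by an element γ with Im γ = 0 (i.e., γ ∈ ℚ). Write a = a₀a′ and b = b₀b′ where a₀, b₀ are generated by rational integers and a′, b′ have no such factors. Then a′ = b′. -/

import Mathlib

/-!
The key fact is that `I * conj I` is generated by a rational integer for every nonzero ideal `I`
(`exists_int_mul_map_conj`). Writing `g` for a generator of `(I * conj I) ∩ ℤ`, the integers
`x * conj x`, `y * conj y` and `x * conj y + y * conj x` are multiples of `g` for all `x, y ∈ I`,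
so `x * conj y / g` has integral trace and norm, hence lies in `𝓞 K`.

Now `γ` is a rational integer `c`, and multiplying `a * conj b = (c)` by `b`, where
`b * conj b = (g)`, gives `(g) * a = (c) * b`. Thus `a'` and `b'` agree up to rational integer
factors. After cancelling common factors these are coprime, so they divide `b'` and `a'`
respectively, and primitivity forces them to be units (`eq_of_int_mul_eq_int_mul`).
-/

open NumberField

/-- In a quadratic field with an embedding that is not real, the real elements form a proper
subfield, which must be `ℚ` since the degree is prime. -/
theorem exists_int_of_im_eq_zero {K : Type*} [Field K] [NumberField K]
    (h2 : Module.finrank ℚ K = 2) (φ : K →+* ℂ) (himag : ∃ x : K, (φ x).im ≠ 0)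
    (z : 𝓞 K) (hz : (φ (algebraMap (𝓞 K) K z)).im = 0) : ∃ n : ℤ, z = n := by
  let S : Subfield K := Complex.ofRealHom.fieldRange.comap φ
  have hS : ∀ w : K, w ∈ S ↔ (φ w).im = 0 := by
    intro w
    simp only [S, Subfield.mem_comap, RingHom.mem_fieldRange, Complex.ofRealHom_eq_coe]
    constructor
    · rintro ⟨r, hr⟩
      simp [← hr]
    · intro h
      exact ⟨(φ w).re, Complex.ext (by simp) (by simp [h])⟩
  let L : IntermediateField ℚ K := S.toIntermediateField fun q => by
    rw [hS]; simp
  have hL : ∀ w : K, w ∈ L ↔ (φ w).im = 0 := hS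
  have hsimple : IsSimpleOrder (IntermediateField ℚ K) :=
    IntermediateField.isSimpleOrder_of_finrank_prime ℚ K (h2 ▸ Nat.prime_two)
  rcases eq_bot_or_eq_top L with h | h
  · have hzL := (hL _).2 hz
    rw [h, IntermediateField.mem_bot] at hzL
    obtain ⟨q, hq⟩ := hzL
    have hqi : IsIntegral ℤ q := by
      rw [← isIntegral_algebraMap_iff (algebraMap ℚ K).injective, hq]
      exact z.isIntegral_coe
    obtain ⟨n, hn⟩ := IsIntegrallyClosed.isIntegral_iff.1 hqi
    refine ⟨n, RingOfIntegers.ext ?_⟩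
    change algebraMap (𝓞 K) K z = algebraMap (𝓞 K) K n
    rw [← hq, ← hn]
    simp
  · obtain ⟨x, hx⟩ := himag
    exact absurd ((hL x).1 (h ▸ IntermediateField.mem_top)) hx

/-- The ideal norm formula `I * conj I = (g)` with `g ∈ ℤ`. -/
theorem exists_int_mul_map_conj {K : Type*} [Field K] [NumberField K]
    (h2 : Module.finrank ℚ K = 2) (φ : K →+* ℂ) (himag : ∃ x : K, (φ x).im ≠ 0)
    (σ : 𝓞 K ≃+* 𝓞 K)
    (hσ : ∀ x : 𝓞 K, φ (algebraMap (𝓞 K) K (σ x)) =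
      (starRingEnd ℂ) (φ (algebraMap (𝓞 K) K x)))
    (I : Ideal (𝓞 K)) (hI : I ≠ ⊥) :
    ∃ g : ℤ, g ≠ 0 ∧ I * Ideal.map (σ : 𝓞 K →+* 𝓞 K) I = Ideal.span {(g : 𝓞 K)} := by
  set P := I * Ideal.map (σ : 𝓞 K →+* 𝓞 K) I with hP
  have hmem : ∀ x ∈ I, ∀ y ∈ I, x * σ y ∈ P := fun x hx y hy =>
    Ideal.mul_mem_mul hx (Ideal.mem_map_of_mem (σ : 𝓞 K →+* 𝓞 K) hy)
  obtain ⟨g, hg⟩ := IsPrincipalIdealRing.principal (Ideal.comap (Int.castRingHom (𝓞 K)) P)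
  have hgP : (g : 𝓞 K) ∈ P := by
    have : g ∈ Ideal.comap (Int.castRingHom (𝓞 K)) P := by
      rw [hg]; exact Ideal.mem_span_singleton_self g
    simpa using this
  have hdvd : ∀ z ∈ P, (φ (algebraMap (𝓞 K) K z)).im = 0 → ∃ n : ℤ, z = g * n := by
    intro z hz him
    obtain ⟨m, rfl⟩ := exists_int_of_im_eq_zero h2 φ himag z him
    have hm : m ∈ Ideal.comap (Int.castRingHom (𝓞 K)) P := by simpa using hz
    rw [hg] at hm
    obtain ⟨n, rfl⟩ := Ideal.mem_span_singleton.1 hm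
    exact ⟨n, by push_cast; rfl⟩
  have hnorm : ∀ x ∈ I, ∃ n : ℤ, x * σ x = g * n := fun x hx =>
    hdvd _ (hmem x hx x hx) (by simp [hσ, Complex.mul_im]; ring)
  have hg0 : g ≠ 0 := by
    rintro rfl
    obtain ⟨x, hx, hx0⟩ := Submodule.exists_mem_ne_zero_of_ne_bot hI
    obtain ⟨n, hn⟩ := hnorm x hx
    simp [hx0] at hn
  refine ⟨g, hg0, le_antisymm ?_ ((Ideal.span_singleton_le_iff_mem _).2 hgP)⟩
  have key : ∀ x ∈ I, ∀ y ∈ I, x * σ y ∈ Ideal.span {(g : 𝓞 K)} := by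
    intro x hx y hy
    obtain ⟨n₁, h₁⟩ := hnorm x hx
    obtain ⟨n₂, h₂⟩ := hnorm y hy
    obtain ⟨m, hm⟩ := hdvd (x * σ y + y * σ x) (P.add_mem (hmem x hx y hy) (hmem y hy x hx))
      (by simp [hσ, Complex.mul_im]; ring)
    have hgK : (g : K) ≠ 0 := by exact_mod_cast hg0
    have hquad : (x * σ y) ^ 2 - g * m * (x * σ y) + g ^ 2 * (n₁ * n₂) = 0 := by
      linear_combination (x * σ y) * hm - y * σ y * h₁ - g * n₁ * h₂
    -- The quotient is a root of `X ^ 2 - m X + n₁ n₂`, whose coefficients are its trace and norm.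
    have hint : IsIntegral ℤ (algebraMap (𝓞 K) K (x * σ y) / g) := by
      refine ⟨Polynomial.X ^ 2 - Polynomial.C m * Polynomial.X + Polynomial.C (n₁ * n₂),
        by monicity!, ?_⟩
      have hK := congrArg (algebraMap (𝓞 K) K) hquad
      simp only [map_add, map_sub, map_pow, map_mul, map_intCast, map_zero] at hK
      simp only [Polynomial.eval₂_add, Polynomial.eval₂_sub, Polynomial.eval₂_mul,
        Polynomial.eval₂_pow, Polynomial.eval₂_X, Polynomial.eval₂_C, map_mul]
      simp only [eq_intCast]
      field_simp
      linear_combination hK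
    rw [Ideal.mem_span_singleton]
    refine ⟨⟨_, hint⟩, RingOfIntegers.ext ?_⟩
    change algebraMap (𝓞 K) K (x * σ y) =
      algebraMap (𝓞 K) K (g : 𝓞 K) * (algebraMap (𝓞 K) K (x * σ y) / g)
    rw [map_intCast, mul_div_cancel₀ _ hgK]
  rw [hP, Ideal.mul_le]
  intro x hx w hw
  obtain ⟨y, hy, rfl⟩ := (Ideal.mem_map_of_equiv σ w).1 hw
  exact key x hx y hy

/-- Two primitive ideals that agree up to nonzero rational integer factors are equal. -/
theorem eq_of_int_mul_eq_int_mul {R : Type*} [CommRing R] [IsDedekindDomain R] [CharZero R]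
    {A B : Ideal R}
    (hA : ∀ n : ℤ, Ideal.span {(n : R)} ∣ A → Ideal.span {(n : R)} = ⊤)
    (hB : ∀ n : ℤ, Ideal.span {(n : R)} ∣ B → Ideal.span {(n : R)} = ⊤)
    {x y : ℤ} (hx : x ≠ 0)
    (h : Ideal.span {(x : R)} * A = Ideal.span {(y : R)} * B) : A = B := by
  obtain ⟨d, x₁, y₁, hcop, rfl, rfl⟩ :
      ∃ d x₁ y₁ : ℤ, IsCoprime x₁ y₁ ∧ x = d * x₁ ∧ y = d * y₁ := by
    obtain ⟨x₁, y₁, hcop, h₁, h₂⟩ :=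
      Int.exists_gcd_one (Int.gcd_pos_of_ne_zero_left y hx)
    exact ⟨_, x₁, y₁, Int.isCoprime_iff_gcd_eq_one.2 hcop, h₁.trans (mul_comm _ _),
      h₂.trans (mul_comm _ _)⟩
  have hd : Ideal.span {(d : R)} ≠ 0 := by
    have := left_ne_zero_of_mul hx
    simpa [Ideal.span_singleton_eq_bot] using this
  have h' : Ideal.span {(x₁ : R)} * A = Ideal.span {(y₁ : R)} * B := by
    apply mul_left_cancel₀ hd
    simpa [← mul_assoc, Ideal.span_singleton_mul_span_singleton] using h
  have hcop' : IsCoprime (Ideal.span {(x₁ : R)}) (Ideal.span {(y₁ : R)}) := by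
    rw [Ideal.isCoprime_span_singleton_iff]
    exact hcop.map (Int.castRingHom R)
  have hx₁ := hB x₁ (hcop'.dvd_of_dvd_mul_left (h' ▸ dvd_mul_right _ _))
  have hy₁ := hA y₁ (hcop'.symm.dvd_of_dvd_mul_left (h' ▸ dvd_mul_right _ _))
  simpa [hx₁, hy₁] using h'

/-- If `a·conj(b)` is principal with a real (rational) generator, then the
non-rationally-generated parts of `a` and `b` coincide. Here `σ` is the ring
automorphism of `𝓞 K` induced by complex conjugation via the embedding `φ`. -/
theorem diagonal_ideals_rational
    (K : Type*) [Field K] [NumberField K]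
    (h2 : Module.finrank ℚ K = 2)
    (himag : ∀ ψ : K →+* ℂ, ∃ x : K, (ψ x).im ≠ 0)
    (φ : K →+* ℂ) (σ : 𝓞 K ≃+* 𝓞 K)
    (hσ : ∀ x : 𝓞 K, φ (algebraMap (𝓞 K) K (σ x)) =
      (starRingEnd ℂ) (φ (algebraMap (𝓞 K) K x)))
    -- "rationally generated" means principal with a rational-integer generator
    (RatGen : Ideal (𝓞 K) → Prop)
    (hRatGen : ∀ I, RatGen I ↔ ∃ m : ℤ, I = Ideal.span {(m : 𝓞 K)})
    (a b a₀ a' b₀ b' : Ideal (𝓞 K))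
    (ha : a ≠ 0) (hb : b ≠ 0)
    (hfa : a = a₀ * a') (hfb : b = b₀ * b')
    (ha₀ : RatGen a₀) (hb₀ : RatGen b₀)
    -- `a'`, `b'` have no nontrivial rationally generated factors
    (ha' : ∀ J : Ideal (𝓞 K), J ∣ a' → RatGen J → J = ⊤)
    (hb' : ∀ J : Ideal (𝓞 K), J ∣ b' → RatGen J → J = ⊤)
    -- `a·conj(b)` is principal, generated by `γ` with `Im γ = 0`
    (γ : 𝓞 K)
    (hgen : a * Ideal.map (σ : 𝓞 K →+* 𝓞 K) b = Ideal.span {γ})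
    (hγ : (φ (algebraMap (𝓞 K) K γ)).im = 0) :
    a' = b' := by
  obtain ⟨p, rfl⟩ := (hRatGen _).1 ha₀
  obtain ⟨q, rfl⟩ := (hRatGen _).1 hb₀
  obtain ⟨c, rfl⟩ := exists_int_of_im_eq_zero h2 φ (himag φ) γ hγ
  obtain ⟨g, hg0, hg⟩ := exists_int_mul_map_conj h2 φ (himag φ) σ hσ b hb
  have hp : p ≠ 0 := by
    rintro rfl
    exact ha (by simp [hfa])
  have hab : Ideal.span {(g : 𝓞 K)} * a = Ideal.span {(c : 𝓞 K)} * b := by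
    rw [← hg, ← hgen]
    ring
  refine eq_of_int_mul_eq_int_mul (x := g * p) (y := c * q)
    (fun n hn => ha' _ hn ((hRatGen _).2 ⟨n, rfl⟩))
    (fun n hn => hb' _ hn ((hRatGen _).2 ⟨n, rfl⟩)) (mul_ne_zero hg0 hp) ?_
  rw [hfa, hfb] at hab
  simpa [← mul_assoc, Ideal.span_singleton_mul_span_singleton] using hab
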